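/- arXiv:2307.13480 — 2 statements merged into one kernel-verified Lean document; each statement's English description precedes it below -/
import Mathlib

section
/- Let ρ_BTN = ρ_b ⊗ ρ_c ⊗ ρ_a be a basic triangle network (BTN) state and let {A_i}, {B_j}, {C_k} be finite families of local observables for Alice, Bob and Charlie. Define T_c as the covariance matrix Γ({A_i^(2) ⊗ 1_{B₁}, 1_{A₂} ⊗ B_j^(1)}, ρ_c) of the reduced observables on the source state ρ_c of A₂B₁, padded with zero blocks in the Charlie sector; define T_b = Γ({A_i^(1), C_k^(2)}, ρ_b) on the A₁ and C₂ factors padded with zeros in the Bob sector, and T_a = Γ({B_j^(2), C_k^(1)}, ρ_a) padded with zeros in the Alice sector, analogously. Then the matrix R := Γ({A_i, B_j, C_k}, ρ_BTN) − T_c − T_b − T_a is block-diagonal with respect to the three party sectors and is positive semidefinite; in particular Γ({A_i, B_j, C_k}, ρ_BTN) = T_c + T_b + T_a + R is a decomposition into four positive semidefinite matrices. -/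
open Matrix Kronecker BigOperators
open scoped ComplexOrder

noncomputable section

/-- Covariance matrix of a family of observables `M` in the state `ρ`. -/
def covMat {n ι : Type*} [Fintype n] (M : ι → Matrix n n ℂ) (ρ : Matrix n n ℂ) :
    Matrix ι ι ℂ :=
  Matrix.of fun i j => (M i * M j * ρ).trace - (M i * ρ).trace * (M j * ρ).trace

/-- A density matrix: positive semidefinite with unit trace. -/
def IsDensity {n : Type*} [Fintype n] (ρ : Matrix n n ℂ) : Prop :=
  ρ.PosSemidef ∧ ρ.trace = 1

/-- Partial trace over the first tensor factor. -/
def ptrace₁ {m n : Type*} [Fintype m] (M : Matrix (m × n) (m × n) ℂ) : Matrix n n ℂ :=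
  Matrix.of fun i j => ∑ k, M (k, i) (k, j)

/-- Partial trace over the second tensor factor. -/
def ptrace₂ {m n : Type*} [Fintype n] (M : Matrix (m × n) (m × n) ℂ) : Matrix m m ℂ :=
  Matrix.of fun i j => ∑ k, M (i, k) (j, k)

/-- Index of a two-qudit space. -/
abbrev D2 (d : ℕ) := Fin d × Fin d

/-- Index of the six-factor triangle-network space, ordered C₂, A₁, A₂, B₁, B₂, C₁. -/
abbrev TriIdx (d : ℕ) := D2 d × (D2 d × D2 d)

/-- The basic triangle network state `ρ_b ⊗ ρ_c ⊗ ρ_a`. -/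
def btnState {d : ℕ} (ρa ρb ρc : Matrix (D2 d) (D2 d) ℂ) :
    Matrix (TriIdx d) (TriIdx d) ℂ :=
  ρb ⊗ₖ (ρc ⊗ₖ ρa)

/-- Embed an observable of Alice (acting on A₁A₂) into the global space. -/
def embedA {d : ℕ} (M : Matrix (D2 d) (D2 d) ℂ) : Matrix (TriIdx d) (TriIdx d) ℂ :=
  Matrix.of fun p q =>
    if p.1.1 = q.1.1 ∧ p.2.1.2 = q.2.1.2 ∧ p.2.2 = q.2.2
    then M (p.1.2, p.2.1.1) (q.1.2, q.2.1.1) else 0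

/-- Embed an observable of Bob (acting on B₁B₂) into the global space. -/
def embedB {d : ℕ} (M : Matrix (D2 d) (D2 d) ℂ) : Matrix (TriIdx d) (TriIdx d) ℂ :=
  Matrix.of fun p q =>
    if p.1 = q.1 ∧ p.2.1.1 = q.2.1.1 ∧ p.2.2.2 = q.2.2.2
    then M (p.2.1.2, p.2.2.1) (q.2.1.2, q.2.2.1) else 0

/-- Embed an observable of Charlie (acting on C₁C₂) into the global space. -/
def embedC {d : ℕ} (M : Matrix (D2 d) (D2 d) ℂ) : Matrix (TriIdx d) (TriIdx d) ℂ :=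
  Matrix.of fun p q =>
    if p.1.2 = q.1.2 ∧ p.2.1 = q.2.1 ∧ p.2.2.1 = q.2.2.1
    then M (p.2.2.2, p.1.1) (q.2.2.2, q.1.1) else 0

section marginals
variable {d : ℕ} (ρa ρb ρc : Matrix (D2 d) (D2 d) ℂ)

/-- Marginal of ρ_BTN on A₁ (second factor of ρ_b = ρ^{C₂A₁}). -/
def margA1 : Matrix (Fin d) (Fin d) ℂ := ptrace₁ ρb
/-- Marginal on C₂. -/
def margC2 : Matrix (Fin d) (Fin d) ℂ := ptrace₂ ρb
/-- Marginal on A₂ (first factor of ρ_c = ρ^{A₂B₁}). -/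
def margA2 : Matrix (Fin d) (Fin d) ℂ := ptrace₂ ρc
/-- Marginal on B₁. -/
def margB1 : Matrix (Fin d) (Fin d) ℂ := ptrace₁ ρc
/-- Marginal on B₂ (first factor of ρ_a = ρ^{B₂C₁}). -/
def margB2 : Matrix (Fin d) (Fin d) ℂ := ptrace₂ ρa
/-- Marginal on C₁. -/
def margC1 : Matrix (Fin d) (Fin d) ℂ := ptrace₁ ρa

/-- Reduced observable A^(2) = tr_{A₁}(A (ρ^{A₁} ⊗ 1)). -/
def redA2 (M : Matrix (D2 d) (D2 d) ℂ) : Matrix (Fin d) (Fin d) ℂ :=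
  ptrace₁ (M * (margA1 ρb ⊗ₖ (1 : Matrix (Fin d) (Fin d) ℂ)))
/-- Reduced observable A^(1) = tr_{A₂}(A (1 ⊗ ρ^{A₂})). -/
def redA1 (M : Matrix (D2 d) (D2 d) ℂ) : Matrix (Fin d) (Fin d) ℂ :=
  ptrace₂ (M * ((1 : Matrix (Fin d) (Fin d) ℂ) ⊗ₖ margA2 ρc))
/-- Reduced observable B^(1) = tr_{B₂}(B (1 ⊗ ρ^{B₂})). -/
def redB1 (M : Matrix (D2 d) (D2 d) ℂ) : Matrix (Fin d) (Fin d) ℂ :=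
  ptrace₂ (M * ((1 : Matrix (Fin d) (Fin d) ℂ) ⊗ₖ margB2 ρa))
/-- Reduced observable B^(2) = tr_{B₁}(B (ρ^{B₁} ⊗ 1)). -/
def redB2 (M : Matrix (D2 d) (D2 d) ℂ) : Matrix (Fin d) (Fin d) ℂ :=
  ptrace₁ (M * (margB1 ρc ⊗ₖ (1 : Matrix (Fin d) (Fin d) ℂ)))
/-- Reduced observable C^(1) = tr_{C₂}(C (1 ⊗ ρ^{C₂})); here C acts on C₁C₂. -/
def redC1 (M : Matrix (D2 d) (D2 d) ℂ) : Matrix (Fin d) (Fin d) ℂ :=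
  ptrace₂ (M * ((1 : Matrix (Fin d) (Fin d) ℂ) ⊗ₖ margC2 ρb))
/-- Reduced observable C^(2) = tr_{C₁}(C (ρ^{C₁} ⊗ 1)). -/
def redC2 (M : Matrix (D2 d) (D2 d) ℂ) : Matrix (Fin d) (Fin d) ℂ :=
  ptrace₁ (M * (margC1 ρa ⊗ₖ (1 : Matrix (Fin d) (Fin d) ℂ)))

end marginals


/-- Sector (party) of an index of the combined observable family:
`0` for Alice, `1` for Bob, `2` for Charlie. -/
def sector {kA kB kC : ℕ} : Fin kA ⊕ (Fin kB ⊕ Fin kC) → Fin 3 :=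
  Sum.elim (fun _ => 0) (Sum.elim (fun _ => 1) (fun _ => 2))


section helpers

variable {m n ι : Type*} [Fintype m] [Fintype n] [DecidableEq m] [DecidableEq n]

theorem kron_ind {P : Matrix (m × n) (m × n) ℂ → Prop}
    (hadd : ∀ p q, P p → P q → P (p + q))
    (hk : ∀ (X : Matrix m m ℂ) (Y : Matrix n n ℂ), P (X ⊗ₖ Y)) (M : Matrix (m × n) (m × n) ℂ) :
    P M := by
  refine Matrix.induction_on' M ?_ hadd ?_
  · simpa using hk 0 0
  · rintro ⟨i, k⟩ ⟨j, l⟩ x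
    have h := hk (single i j x) (single k l 1)
    rwa [single_kronecker_single, mul_one] at h

omit [Fintype n] [DecidableEq m] [DecidableEq n] in
theorem ptrace₁_kron (X : Matrix m m ℂ) (Y : Matrix n n ℂ) : ptrace₁ (X ⊗ₖ Y) = X.trace • Y := by
  ext i j
  simp [ptrace₁, Matrix.trace, Finset.sum_mul]

omit [Fintype m] [DecidableEq m] [DecidableEq n] in
theorem ptrace₂_kron (X : Matrix m m ℂ) (Y : Matrix n n ℂ) : ptrace₂ (X ⊗ₖ Y) = Y.trace • X := by
  ext i j
  simp [ptrace₂, Matrix.trace, Finset.mul_sum, mul_comm]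

omit [Fintype n] [DecidableEq m] [DecidableEq n] in
theorem ptrace₁_add (M N : Matrix (m × n) (m × n) ℂ) :
    ptrace₁ (M + N) = ptrace₁ M + ptrace₁ N := by
  ext i j
  simp [ptrace₁, Finset.sum_add_distrib]

omit [Fintype m] [DecidableEq m] [DecidableEq n] in
theorem ptrace₂_add (M N : Matrix (m × n) (m × n) ℂ) :
    ptrace₂ (M + N) = ptrace₂ M + ptrace₂ N := by
  ext i j
  simp [ptrace₂, Finset.sum_add_distrib]

omit [DecidableEq m] [DecidableEq n] in
theorem trace_ptrace₁ (M : Matrix (m × n) (m × n) ℂ) : (ptrace₁ M).trace = M.trace := by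
  simp only [ptrace₁, Matrix.trace, Fintype.sum_prod_type, Matrix.diag, Matrix.of_apply]
  exact Finset.sum_comm

omit [DecidableEq m] [DecidableEq n] in
theorem trace_ptrace₂ (M : Matrix (m × n) (m × n) ℂ) : (ptrace₂ M).trace = M.trace := by
  simp [ptrace₂, Matrix.trace, Fintype.sum_prod_type]

omit [Fintype n] [DecidableEq m] [DecidableEq n] in
theorem ptrace₁_conjTranspose (M : Matrix (m × n) (m × n) ℂ) : (ptrace₁ M)ᴴ = ptrace₁ Mᴴ := by
  ext i j
  simp [ptrace₁]

omit [Fintype m] [DecidableEq m] [DecidableEq n] in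
theorem ptrace₂_conjTranspose (M : Matrix (m × n) (m × n) ℂ) : (ptrace₂ M)ᴴ = ptrace₂ Mᴴ := by
  ext i j
  simp [ptrace₂]

omit [DecidableEq m] [DecidableEq n] in
theorem psd_ptrace₁ {M : Matrix (m × n) (m × n) ℂ} (h : M.PosSemidef) : (ptrace₁ M).PosSemidef := by
  have : ptrace₁ M = ∑ k, M.submatrix (fun i => (k, i)) (fun i => (k, i)) := by
    ext i j
    simp [ptrace₁, Matrix.sum_apply]
  rw [this]
  exact Matrix.posSemidef_sum _ fun k _ => h.submatrix _

omit [DecidableEq m] [DecidableEq n] in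
theorem psd_ptrace₂ {M : Matrix (m × n) (m × n) ℂ} (h : M.PosSemidef) : (ptrace₂ M).PosSemidef := by
  have : ptrace₂ M = ∑ k, M.submatrix (fun i => (i, k)) (fun i => (i, k)) := by
    ext i j
    simp [ptrace₂, Matrix.sum_apply]
  rw [this]
  exact Matrix.posSemidef_sum _ fun k _ => h.submatrix _

theorem trace_left (X : Matrix m m ℂ) (ρ : Matrix (m × n) (m × n) ℂ) :
    ((X ⊗ₖ (1 : Matrix n n ℂ)) * ρ).trace = (X * ptrace₂ ρ).trace := by
  induction ρ using kron_ind with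
  | hadd p q hp hq => simp [mul_add, ptrace₂_add, hp, hq]
  | hk Y Z => simp [← mul_kronecker_mul, trace_kronecker, ptrace₂_kron, mul_comm]

theorem trace_right (X : Matrix n n ℂ) (ρ : Matrix (m × n) (m × n) ℂ) :
    (((1 : Matrix m m ℂ) ⊗ₖ X) * ρ).trace = (X * ptrace₁ ρ).trace := by
  induction ρ using kron_ind with
  | hadd p q hp hq => simp [mul_add, ptrace₁_add, hp, hq]
  | hk Y Z => simp [← mul_kronecker_mul, trace_kronecker, ptrace₁_kron]

/-- reduced observable on the first factor -/
def red1 (σ : Matrix n n ℂ) (M : Matrix (m × n) (m × n) ℂ) : Matrix m m ℂ :=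
  ptrace₂ (M * ((1 : Matrix m m ℂ) ⊗ₖ σ))

/-- reduced observable on the second factor -/
def red2 (σ : Matrix m m ℂ) (M : Matrix (m × n) (m × n) ℂ) : Matrix n n ℂ :=
  ptrace₁ (M * (σ ⊗ₖ (1 : Matrix n n ℂ)))

omit [DecidableEq n] in
theorem red1_add (σ : Matrix n n ℂ) (M N : Matrix (m × n) (m × n) ℂ) :
    red1 σ (M + N) = red1 σ M + red1 σ N := by
  simp [red1, add_mul, ptrace₂_add]

omit [DecidableEq m] in
theorem red2_add (σ : Matrix m m ℂ) (M N : Matrix (m × n) (m × n) ℂ) :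
    red2 σ (M + N) = red2 σ M + red2 σ N := by
  simp [red2, add_mul, ptrace₁_add]

omit [DecidableEq n] in
theorem red1_kron (σ : Matrix n n ℂ) (X : Matrix m m ℂ) (Y : Matrix n n ℂ) :
    red1 σ (X ⊗ₖ Y) = (Y * σ).trace • X := by
  simp [red1, ← mul_kronecker_mul, ptrace₂_kron]

omit [DecidableEq m] in
theorem red2_kron (σ : Matrix m m ℂ) (X : Matrix m m ℂ) (Y : Matrix n n ℂ) :
    red2 σ (X ⊗ₖ Y) = (X * σ).trace • Y := by
  simp [red2, ← mul_kronecker_mul, ptrace₁_kron]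

theorem red1_herm {σ : Matrix n n ℂ} (hσ : σ.IsHermitian) {M : Matrix (m × n) (m × n) ℂ}
    (hM : M.IsHermitian) : (red1 σ M).IsHermitian := by
  have key : ∀ N : Matrix (m × n) (m × n) ℂ,
      ptrace₂ (((1 : Matrix m m ℂ) ⊗ₖ σ) * N) = ptrace₂ (N * ((1 : Matrix m m ℂ) ⊗ₖ σ)) := by
    intro N
    induction N using kron_ind with
    | hadd p q hp hq => simp [mul_add, add_mul, ptrace₂_add, hp, hq]
    | hk Y Z => simp [← mul_kronecker_mul, ptrace₂_kron, Matrix.trace_mul_comm σ]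
  unfold Matrix.IsHermitian red1
  rw [ptrace₂_conjTranspose, conjTranspose_mul, conjTranspose_kronecker, hM.eq, hσ.eq,
    conjTranspose_one, key]

theorem red2_herm {σ : Matrix m m ℂ} (hσ : σ.IsHermitian) {M : Matrix (m × n) (m × n) ℂ}
    (hM : M.IsHermitian) : (red2 σ M).IsHermitian := by
  have key : ∀ N : Matrix (m × n) (m × n) ℂ,
      ptrace₁ ((σ ⊗ₖ (1 : Matrix n n ℂ)) * N) = ptrace₁ (N * (σ ⊗ₖ (1 : Matrix n n ℂ))) := by
    intro N
    induction N using kron_ind with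
    | hadd p q hp hq => simp [mul_add, add_mul, ptrace₁_add, hp, hq]
    | hk Y Z => simp [← mul_kronecker_mul, ptrace₁_kron, Matrix.trace_mul_comm σ]
  unfold Matrix.IsHermitian red2
  rw [ptrace₁_conjTranspose, conjTranspose_mul, conjTranspose_kronecker, hM.eq, hσ.eq,
    conjTranspose_one, key]

omit [DecidableEq m] in
theorem star_expect {M ρ : Matrix m m ℂ} (hM : M.IsHermitian) (hρ : ρ.IsHermitian) :
    star (M * ρ).trace = (M * ρ).trace := by
  rw [← trace_conjTranspose, conjTranspose_mul, hM.eq, hρ.eq, trace_mul_comm]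

omit [DecidableEq m] in
/-- Gram matrices are positive semidefinite. -/
theorem gram_psd [Fintype ι] (M : ι → Matrix m m ℂ) {ρ : Matrix m m ℂ} (hρ : ρ.PosSemidef)
    (hM : ∀ i, (M i).IsHermitian) :
    (Matrix.of fun i j => (M i * M j * ρ).trace : Matrix ι ι ℂ).PosSemidef := by
  refine PosSemidef.of_dotProduct_mulVec_nonneg ?_ ?_
  · ext i j
    rw [conjTranspose_apply, of_apply, of_apply, ← trace_conjTranspose, conjTranspose_mul,
      conjTranspose_mul, (hM i).eq, (hM j).eq, hρ.isHermitian.eq, trace_mul_comm]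
  · intro x
    have h := (hρ.mul_mul_conjTranspose_same (∑ i, x i • M i)).trace_nonneg
    convert h using 1
    rw [trace_mul_comm, ← mul_assoc, conjTranspose_sum]
    simp only [conjTranspose_smul, (hM _).eq, Finset.sum_mul, Finset.mul_sum, trace_sum,
      smul_mul_assoc, mul_smul_comm, trace_smul, dotProduct, mulVec, of_apply, Pi.star_apply,
      smul_eq_mul]
    rw [Finset.sum_comm]
    refine Finset.sum_congr rfl fun i _ => Finset.sum_congr rfl fun j _ => ?_
    ring

theorem covMat_psd [Fintype ι] (M : ι → Matrix m m ℂ) {ρ : Matrix m m ℂ} (hρ : IsDensity ρ)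
    (hM : ∀ i, (M i).IsHermitian) : (covMat M ρ).PosSemidef := by
  have h := gram_psd (fun i => M i - (M i * ρ).trace • (1 : Matrix m m ℂ)) hρ.1 (fun i => by
    unfold Matrix.IsHermitian
    rw [conjTranspose_sub, conjTranspose_smul, (hM i).eq, star_expect (hM i) hρ.1.isHermitian,
      conjTranspose_one])
  convert h using 1
  ext i j
  simp only [covMat, of_apply, sub_mul, mul_sub, trace_sub, smul_mul_assoc, mul_smul_comm,
    trace_smul, one_mul, mul_one, smul_eq_mul, hρ.2]
  ring

/-- centred observable -/
def cen (σ : Matrix m m ℂ) (τ : Matrix n n ℂ) (M : Matrix (m × n) (m × n) ℂ) :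
    Matrix (m × n) (m × n) ℂ :=
  M - red1 τ M ⊗ₖ (1 : Matrix n n ℂ) - (1 : Matrix m m ℂ) ⊗ₖ red2 σ M
    + (M * (σ ⊗ₖ τ)).trace • (1 : Matrix (m × n) (m × n) ℂ)

theorem cen_herm {σ : Matrix m m ℂ} {τ : Matrix n n ℂ} (hσ : σ.IsHermitian) (hτ : τ.IsHermitian)
    {M : Matrix (m × n) (m × n) ℂ} (hM : M.IsHermitian) : (cen σ τ M).IsHermitian := by
  have h : (σ ⊗ₖ τ).IsHermitian := by
    unfold Matrix.IsHermitian
    rw [conjTranspose_kronecker, hσ.eq, hτ.eq]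
  unfold Matrix.IsHermitian cen
  rw [conjTranspose_add, conjTranspose_sub, conjTranspose_sub, conjTranspose_smul,
    star_expect hM h, conjTranspose_kronecker, conjTranspose_kronecker, (red1_herm hτ hM).eq,
    (red2_herm hσ hM).eq, hM.eq]
  simp

variable (σ : Matrix m m ℂ) (τ : Matrix n n ℂ)

theorem ex_left (X : Matrix m m ℂ) (N : Matrix (m × n) (m × n) ℂ) :
    ((X ⊗ₖ (1 : Matrix n n ℂ)) * N * (σ ⊗ₖ τ)).trace = (X * red1 τ N * σ).trace := by
  induction N using kron_ind with
  | hadd p q hp hq => simp [mul_add, add_mul, red1_add, hp, hq]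
  | hk Y Z => simp [← mul_kronecker_mul, red1_kron, trace_kronecker, mul_comm]

theorem ex_left' (X : Matrix m m ℂ) (N : Matrix (m × n) (m × n) ℂ) :
    (N * (X ⊗ₖ (1 : Matrix n n ℂ)) * (σ ⊗ₖ τ)).trace = (red1 τ N * X * σ).trace := by
  induction N using kron_ind with
  | hadd p q hp hq => simp [mul_add, add_mul, red1_add, hp, hq]
  | hk Y Z => simp [← mul_kronecker_mul, red1_kron, trace_kronecker, mul_comm]

theorem ex_right (X : Matrix n n ℂ) (N : Matrix (m × n) (m × n) ℂ) :
    (((1 : Matrix m m ℂ) ⊗ₖ X) * N * (σ ⊗ₖ τ)).trace = (X * red2 σ N * τ).trace := by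
  induction N using kron_ind with
  | hadd p q hp hq => simp [mul_add, add_mul, red2_add, hp, hq]
  | hk Y Z => simp [← mul_kronecker_mul, red2_kron, trace_kronecker]

theorem ex_right' (X : Matrix n n ℂ) (N : Matrix (m × n) (m × n) ℂ) :
    (N * ((1 : Matrix m m ℂ) ⊗ₖ X) * (σ ⊗ₖ τ)).trace = (red2 σ N * X * τ).trace := by
  induction N using kron_ind with
  | hadd p q hp hq => simp [mul_add, add_mul, red2_add, hp, hq]
  | hk Y Z => simp [← mul_kronecker_mul, red2_kron, trace_kronecker]

theorem ex_red1 (N : Matrix (m × n) (m × n) ℂ) :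
    (red1 τ N * σ).trace = (N * (σ ⊗ₖ τ)).trace := by
  have := ex_left σ τ 1 N
  simpa using this.symm

theorem ex_red2 (N : Matrix (m × n) (m × n) ℂ) :
    (red2 σ N * τ).trace = (N * (σ ⊗ₖ τ)).trace := by
  have := ex_right σ τ 1 N
  simpa using this.symm

theorem cen_gram (hσ : σ.trace = 1) (hτ : τ.trace = 1) (M N : Matrix (m × n) (m × n) ℂ) :
    (cen σ τ M * cen σ τ N * (σ ⊗ₖ τ)).trace =
      (M * N * (σ ⊗ₖ τ)).trace - (red1 τ M * red1 τ N * σ).trace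
        - (red2 σ M * red2 σ N * τ).trace
        + (M * (σ ⊗ₖ τ)).trace * (N * (σ ⊗ₖ τ)).trace := by
  have e1 : ∀ X : Matrix m m ℂ, ((X ⊗ₖ (1 : Matrix n n ℂ)) * (σ ⊗ₖ τ)).trace = (X * σ).trace := by
    intro X
    simp [← mul_kronecker_mul, trace_kronecker, hτ]
  have e2 : ∀ X : Matrix n n ℂ, (((1 : Matrix m m ℂ) ⊗ₖ X) * (σ ⊗ₖ τ)).trace = (X * τ).trace := by
    intro X
    simp [← mul_kronecker_mul, trace_kronecker, hσ]
  have e3 : ∀ (X : Matrix m m ℂ) (Y : Matrix n n ℂ),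
      ((X ⊗ₖ (1 : Matrix n n ℂ)) * ((1 : Matrix m m ℂ) ⊗ₖ Y) * (σ ⊗ₖ τ)).trace
        = (X * σ).trace * (Y * τ).trace := by
    intro X Y
    simp [← mul_kronecker_mul, trace_kronecker]
  have e4 : ∀ (X : Matrix m m ℂ) (Y : Matrix n n ℂ),
      (((1 : Matrix m m ℂ) ⊗ₖ Y) * (X ⊗ₖ (1 : Matrix n n ℂ)) * (σ ⊗ₖ τ)).trace
        = (X * σ).trace * (Y * τ).trace := by
    intro X Y
    simp [← mul_kronecker_mul, trace_kronecker]
  have e5 : ∀ X Y : Matrix m m ℂ,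
      ((X ⊗ₖ (1 : Matrix n n ℂ)) * (Y ⊗ₖ (1 : Matrix n n ℂ)) * (σ ⊗ₖ τ)).trace
        = (X * Y * σ).trace := by
    intro X Y
    simp [← mul_kronecker_mul, trace_kronecker, hτ]
  have e6 : ∀ X Y : Matrix n n ℂ,
      (((1 : Matrix m m ℂ) ⊗ₖ X) * ((1 : Matrix m m ℂ) ⊗ₖ Y) * (σ ⊗ₖ τ)).trace
        = (X * Y * τ).trace := by
    intro X Y
    simp [← mul_kronecker_mul, trace_kronecker, hσ]
  have e7 : (σ ⊗ₖ τ).trace = 1 := by simp [trace_kronecker, hσ, hτ]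
  unfold cen
  simp only [sub_mul, mul_sub, add_mul, mul_add, trace_sub, trace_add, smul_mul_assoc,
    mul_smul_comm, trace_smul, one_mul, mul_one, smul_eq_mul, e1, e2, e3, e4, e5, e6, e7,
    ex_left' σ τ _ M, ex_right' σ τ _ M, ex_left σ τ _ N, ex_right σ τ _ N, ex_red1, ex_red2]
  ring

end helpers

section embeds

variable {d : ℕ}

theorem embedA_kron (X Y : Matrix (Fin d) (Fin d) ℂ) :
    embedA (X ⊗ₖ Y) = (1 ⊗ₖ X) ⊗ₖ ((Y ⊗ₖ 1) ⊗ₖ (1 : Matrix (D2 d) (D2 d) ℂ)) := by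
  ext ⟨⟨a, b⟩, ⟨c, e⟩, f⟩ ⟨⟨a', b'⟩, ⟨c', e'⟩, f'⟩
  by_cases h1 : a = a' <;> by_cases h2 : e = e' <;> by_cases h3 : f = f' <;>
    simp [embedA, h1, h2, h3, kroneckerMap_apply, one_apply]

theorem embedB_kron (X Y : Matrix (Fin d) (Fin d) ℂ) :
    embedB (X ⊗ₖ Y) = (1 : Matrix (D2 d) (D2 d) ℂ) ⊗ₖ ((1 ⊗ₖ X) ⊗ₖ (Y ⊗ₖ 1)) := by
  ext ⟨f, ⟨a, b⟩, ⟨c, e⟩⟩ ⟨f', ⟨a', b'⟩, ⟨c', e'⟩⟩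
  by_cases h1 : a = a' <;> by_cases h2 : e = e' <;> by_cases h3 : f = f' <;>
    simp [embedB, h1, h2, h3, kroneckerMap_apply, one_apply]

theorem embedC_kron (X Y : Matrix (Fin d) (Fin d) ℂ) :
    embedC (X ⊗ₖ Y) = (Y ⊗ₖ 1) ⊗ₖ ((1 : Matrix (D2 d) (D2 d) ℂ) ⊗ₖ (1 ⊗ₖ X)) := by
  ext ⟨⟨a, b⟩, f, ⟨c, e⟩⟩ ⟨⟨a', b'⟩, f', ⟨c', e'⟩⟩
  by_cases h1 : b = b' <;> by_cases h2 : c = c' <;> by_cases h3 : f = f' <;>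
    simp [embedC, h1, h2, h3, kroneckerMap_apply, one_apply, mul_comm]

theorem embedA_add (M N : Matrix (D2 d) (D2 d) ℂ) : embedA (M + N) = embedA M + embedA N := by
  ext p q
  simp only [embedA, of_apply, Matrix.add_apply]
  split_ifs <;> simp

theorem embedB_add (M N : Matrix (D2 d) (D2 d) ℂ) : embedB (M + N) = embedB M + embedB N := by
  ext p q
  simp only [embedB, of_apply, Matrix.add_apply]
  split_ifs <;> simp

theorem embedC_add (M N : Matrix (D2 d) (D2 d) ℂ) : embedC (M + N) = embedC M + embedC N := by
  ext p q
  simp only [embedC, of_apply, Matrix.add_apply]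
  split_ifs <;> simp

theorem embedA_mul (M N : Matrix (D2 d) (D2 d) ℂ) : embedA M * embedA N = embedA (M * N) := by
  induction M using kron_ind with
  | hadd p q hp hq => simp [add_mul, embedA_add, hp, hq]
  | hk X Y =>
    induction N using kron_ind with
    | hadd p q hp hq => simp [mul_add, embedA_add, hp, hq]
    | hk Z W => simp only [← mul_kronecker_mul, embedA_kron, mul_one]

theorem embedB_mul (M N : Matrix (D2 d) (D2 d) ℂ) : embedB M * embedB N = embedB (M * N) := by
  induction M using kron_ind with
  | hadd p q hp hq => simp [add_mul, embedB_add, hp, hq]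
  | hk X Y =>
    induction N using kron_ind with
    | hadd p q hp hq => simp [mul_add, embedB_add, hp, hq]
    | hk Z W => simp only [← mul_kronecker_mul, embedB_kron, mul_one]

theorem embedC_mul (M N : Matrix (D2 d) (D2 d) ℂ) : embedC M * embedC N = embedC (M * N) := by
  induction M using kron_ind with
  | hadd p q hp hq => simp [add_mul, embedC_add, hp, hq]
  | hk X Y =>
    induction N using kron_ind with
    | hadd p q hp hq => simp [mul_add, embedC_add, hp, hq]
    | hk Z W => simp only [← mul_kronecker_mul, embedC_kron, mul_one]

theorem embedA_herm {M : Matrix (D2 d) (D2 d) ℂ} (h : M.IsHermitian) : (embedA M).IsHermitian := by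
  ext p q
  simp only [conjTranspose_apply, embedA, of_apply, eq_comm]
  split_ifs
  · exact (h.apply _ _).symm
  · simp

theorem embedB_herm {M : Matrix (D2 d) (D2 d) ℂ} (h : M.IsHermitian) : (embedB M).IsHermitian := by
  ext p q
  simp only [conjTranspose_apply, embedB, of_apply, eq_comm]
  split_ifs
  · exact (h.apply _ _).symm
  · simp

theorem embedC_herm {M : Matrix (D2 d) (D2 d) ℂ} (h : M.IsHermitian) : (embedC M).IsHermitian := by
  ext p q
  simp only [conjTranspose_apply, embedC, of_apply, eq_comm]
  split_ifs
  · exact (h.apply _ _).symm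
  · simp

variable {ρa ρb ρc : Matrix (D2 d) (D2 d) ℂ}

theorem exA (ha : ρa.trace = 1) (M : Matrix (D2 d) (D2 d) ℂ) :
    (embedA M * btnState ρa ρb ρc).trace = (M * (ptrace₁ ρb ⊗ₖ ptrace₂ ρc)).trace := by
  induction M using kron_ind with
  | hadd p q hp hq => simp [add_mul, embedA_add, hp, hq]
  | hk X Y =>
    simp only [embedA_kron, btnState, ← mul_kronecker_mul, trace_kronecker, trace_left,
      trace_right, one_mul, ha, mul_one]

theorem exB (hb : ρb.trace = 1) (M : Matrix (D2 d) (D2 d) ℂ) :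
    (embedB M * btnState ρa ρb ρc).trace = (M * (ptrace₁ ρc ⊗ₖ ptrace₂ ρa)).trace := by
  induction M using kron_ind with
  | hadd p q hp hq => simp [add_mul, embedB_add, hp, hq]
  | hk X Y =>
    simp only [embedB_kron, btnState, ← mul_kronecker_mul, trace_kronecker, trace_left,
      trace_right, one_mul, hb]

theorem exC (hc : ρc.trace = 1) (M : Matrix (D2 d) (D2 d) ℂ) :
    (embedC M * btnState ρa ρb ρc).trace = (M * (ptrace₁ ρa ⊗ₖ ptrace₂ ρb)).trace := by
  induction M using kron_ind with
  | hadd p q hp hq => simp [add_mul, embedC_add, hp, hq]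
  | hk X Y =>
    simp only [embedC_kron, btnState, ← mul_kronecker_mul, trace_kronecker, trace_left,
      trace_right, one_mul, hc]
    ring

theorem exAB (M N : Matrix (D2 d) (D2 d) ℂ) :
    (embedA M * embedB N * btnState ρa ρb ρc).trace =
      ((red2 (ptrace₁ ρb) M ⊗ₖ (1 : Matrix (Fin d) (Fin d) ℂ)) *
        ((1 : Matrix (Fin d) (Fin d) ℂ) ⊗ₖ red1 (ptrace₂ ρa) N) * ρc).trace := by
  induction M using kron_ind with
  | hadd p q hp hq => simp only [add_mul, embedA_add, red2_add, add_kronecker, trace_add, hp, hq]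
  | hk X Y =>
    induction N using kron_ind with
    | hadd p q hp hq =>
      simp only [mul_add, add_mul, embedB_add, red1_add, kronecker_add, trace_add, hp, hq]
    | hk Z W =>
      simp only [embedA_kron, embedB_kron, btnState, ← mul_kronecker_mul, trace_kronecker,
        one_mul, mul_one, red1_kron, red2_kron, trace_left, trace_right, smul_kronecker,
        kronecker_smul, smul_mul_assoc, mul_smul_comm, trace_smul, smul_eq_mul]
      ring

theorem exAC (M N : Matrix (D2 d) (D2 d) ℂ) :
    (embedA M * embedC N * btnState ρa ρb ρc).trace =
      (((1 : Matrix (Fin d) (Fin d) ℂ) ⊗ₖ red1 (ptrace₂ ρc) M) *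
        (red2 (ptrace₁ ρa) N ⊗ₖ (1 : Matrix (Fin d) (Fin d) ℂ)) * ρb).trace := by
  induction M using kron_ind with
  | hadd p q hp hq => simp only [add_mul, embedA_add, red1_add, kronecker_add, trace_add, hp, hq]
  | hk X Y =>
    induction N using kron_ind with
    | hadd p q hp hq =>
      simp only [mul_add, add_mul, embedC_add, red2_add, add_kronecker, trace_add, hp, hq]
    | hk Z W =>
      simp only [embedA_kron, embedC_kron, btnState, ← mul_kronecker_mul, trace_kronecker,
        one_mul, mul_one, red1_kron, red2_kron, trace_left, trace_right, smul_kronecker,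
        kronecker_smul, smul_mul_assoc, mul_smul_comm, trace_smul, smul_eq_mul]
      ring

theorem exBC (M N : Matrix (D2 d) (D2 d) ℂ) :
    (embedB M * embedC N * btnState ρa ρb ρc).trace =
      ((red2 (ptrace₁ ρc) M ⊗ₖ (1 : Matrix (Fin d) (Fin d) ℂ)) *
        ((1 : Matrix (Fin d) (Fin d) ℂ) ⊗ₖ red1 (ptrace₂ ρb) N) * ρa).trace := by
  induction M using kron_ind with
  | hadd p q hp hq => simp only [add_mul, embedB_add, red2_add, add_kronecker, trace_add, hp, hq]
  | hk X Y =>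
    induction N using kron_ind with
    | hadd p q hp hq =>
      simp only [mul_add, add_mul, embedC_add, red1_add, kronecker_add, trace_add, hp, hq]
    | hk Z W =>
      simp only [embedB_kron, embedC_kron, btnState, ← mul_kronecker_mul, trace_kronecker,
        one_mul, mul_one, red1_kron, red2_kron, trace_left, trace_right, smul_kronecker,
        kronecker_smul, smul_mul_assoc, mul_smul_comm, trace_smul, smul_eq_mul]

theorem kron_one_herm {X : Matrix (Fin d) (Fin d) ℂ} (h : X.IsHermitian) :
    (X ⊗ₖ (1 : Matrix (Fin d) (Fin d) ℂ)).IsHermitian := by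
  unfold Matrix.IsHermitian
  rw [conjTranspose_kronecker, h.eq, conjTranspose_one]

theorem one_kron_herm {X : Matrix (Fin d) (Fin d) ℂ} (h : X.IsHermitian) :
    ((1 : Matrix (Fin d) (Fin d) ℂ) ⊗ₖ X).IsHermitian := by
  unfold Matrix.IsHermitian
  rw [conjTranspose_kronecker, h.eq, conjTranspose_one]

theorem kron_one_mul (X Y : Matrix (Fin d) (Fin d) ℂ) :
    (X ⊗ₖ (1 : Matrix (Fin d) (Fin d) ℂ)) * (Y ⊗ₖ (1 : Matrix (Fin d) (Fin d) ℂ)) =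
      (X * Y) ⊗ₖ (1 : Matrix (Fin d) (Fin d) ℂ) := by
  rw [← mul_kronecker_mul, one_mul]

theorem one_kron_mul (X Y : Matrix (Fin d) (Fin d) ℂ) :
    ((1 : Matrix (Fin d) (Fin d) ℂ) ⊗ₖ X) * ((1 : Matrix (Fin d) (Fin d) ℂ) ⊗ₖ Y) =
      (1 : Matrix (Fin d) (Fin d) ℂ) ⊗ₖ (X * Y) := by
  rw [← mul_kronecker_mul, one_mul]

end embeds

/-- Block decomposition of the covariance matrix of a basic
triangle network state: `Γ = T_c + T_b + T_a + R` with `T_a, T_b, T_c` the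
covariance matrices of the reduced observables on the respective source states
(padded with zeros on the remaining sector) and `R` block-diagonal and positive
semidefinite; all four summands are positive semidefinite. -/
theorem stmt0 {d kA kB kC : ℕ} (hd : 1 ≤ d)
    (ρa ρb ρc : Matrix (D2 d) (D2 d) ℂ)
    (hρa : IsDensity ρa) (hρb : IsDensity ρb) (hρc : IsDensity ρc)
    (A : Fin kA → Matrix (D2 d) (D2 d) ℂ) (hA : ∀ i, (A i).IsHermitian)
    (B : Fin kB → Matrix (D2 d) (D2 d) ℂ) (hB : ∀ j, (B j).IsHermitian)
    (C : Fin kC → Matrix (D2 d) (D2 d) ℂ) (hC : ∀ k, (C k).IsHermitian)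
    -- the covariance matrix of the full family of local observables on ρ_BTN
    (Γ : Matrix (Fin kA ⊕ (Fin kB ⊕ Fin kC)) (Fin kA ⊕ (Fin kB ⊕ Fin kC)) ℂ)
    (hΓ : Γ = covMat
      (Sum.elim (fun i => embedA (A i))
        (Sum.elim (fun j => embedB (B j)) (fun k => embedC (C k))))
      (btnState ρa ρb ρc))
    -- T_c : CM of the reduced observables A_i^(2) ⊗ 1, 1 ⊗ B_j^(1) on ρ_c,
    -- padded with zeros on the Charlie sector
    (Tc : Matrix (Fin kA ⊕ (Fin kB ⊕ Fin kC)) (Fin kA ⊕ (Fin kB ⊕ Fin kC)) ℂ)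
    (hTc : Tc = covMat
      (Sum.elim (fun i => redA2 ρb (A i) ⊗ₖ (1 : Matrix (Fin d) (Fin d) ℂ))
        (Sum.elim (fun j => (1 : Matrix (Fin d) (Fin d) ℂ) ⊗ₖ redB1 ρa (B j))
          (fun _ => (0 : Matrix (D2 d) (D2 d) ℂ)))) ρc)
    -- T_b : CM of the reduced observables 1 ⊗ A_i^(1), C_k^(2) ⊗ 1 on ρ_b
    -- (whose factors are ordered C₂, A₁), padded with zeros on the Bob sector
    (Tb : Matrix (Fin kA ⊕ (Fin kB ⊕ Fin kC)) (Fin kA ⊕ (Fin kB ⊕ Fin kC)) ℂ)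
    (hTb : Tb = covMat
      (Sum.elim (fun i => (1 : Matrix (Fin d) (Fin d) ℂ) ⊗ₖ redA1 ρc (A i))
        (Sum.elim (fun _ => (0 : Matrix (D2 d) (D2 d) ℂ))
          (fun k => redC2 ρa (C k) ⊗ₖ (1 : Matrix (Fin d) (Fin d) ℂ)))) ρb)
    -- T_a : CM of the reduced observables B_j^(2) ⊗ 1, 1 ⊗ C_k^(1) on ρ_a
    -- (whose factors are ordered B₂, C₁), padded with zeros on the Alice sector
    (Ta : Matrix (Fin kA ⊕ (Fin kB ⊕ Fin kC)) (Fin kA ⊕ (Fin kB ⊕ Fin kC)) ℂ)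
    (hTa : Ta = covMat
      (Sum.elim (fun _ => (0 : Matrix (D2 d) (D2 d) ℂ))
        (Sum.elim (fun j => redB2 ρc (B j) ⊗ₖ (1 : Matrix (Fin d) (Fin d) ℂ))
          (fun k => (1 : Matrix (Fin d) (Fin d) ℂ) ⊗ₖ redC1 ρb (C k)))) ρa)
    (R : Matrix (Fin kA ⊕ (Fin kB ⊕ Fin kC)) (Fin kA ⊕ (Fin kB ⊕ Fin kC)) ℂ)
    (hR : R = Γ - Tc - Tb - Ta) :
    (∀ p q, sector p ≠ sector q → R p q = 0) ∧
      R.PosSemidef ∧ Tc.PosSemidef ∧ Tb.PosSemidef ∧ Ta.PosSemidef ∧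
      Γ = Tc + Tb + Ta + R := by
  obtain ⟨pa, ta⟩ := hρa
  obtain ⟨pb, tb⟩ := hρb
  obtain ⟨pc, tc⟩ := hρc
  have ha1 := psd_ptrace₁ pa
  have ha2 := psd_ptrace₂ pa
  have hb1 := psd_ptrace₁ pb
  have hb2 := psd_ptrace₂ pb
  have hc1 := psd_ptrace₁ pc
  have hc2 := psd_ptrace₂ pc
  have sa1 : (ptrace₁ ρa).trace = 1 := by rw [trace_ptrace₁, ta]
  have sa2 : (ptrace₂ ρa).trace = 1 := by rw [trace_ptrace₂, ta]
  have sb1 : (ptrace₁ ρb).trace = 1 := by rw [trace_ptrace₁, tb]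
  have sb2 : (ptrace₂ ρb).trace = 1 := by rw [trace_ptrace₂, tb]
  have sc1 : (ptrace₁ ρc).trace = 1 := by rw [trace_ptrace₁, tc]
  have sc2 : (ptrace₂ ρc).trace = 1 := by rw [trace_ptrace₂, tc]
  have dA2 : redA2 ρb = red2 (ptrace₁ ρb) := rfl
  have dA1 : redA1 ρc = red1 (ptrace₂ ρc) := rfl
  have dB1 : redB1 ρa = red1 (ptrace₂ ρa) := rfl
  have dB2 : redB2 ρc = red2 (ptrace₁ ρc) := rfl
  have dC1 : redC1 ρb = red1 (ptrace₂ ρb) := rfl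
  have dC2 : redC2 ρa = red2 (ptrace₁ ρa) := rfl
  rw [dA2, dB1] at hTc
  rw [dA1, dC2] at hTb
  rw [dB2, dC1] at hTa
  have hTcP : Tc.PosSemidef := by
    rw [hTc]
    refine covMat_psd _ ⟨pc, tc⟩ ?_
    rintro (i | j | k)
    · exact kron_one_herm (red2_herm hb1.isHermitian (hA i))
    · exact one_kron_herm (red1_herm ha2.isHermitian (hB j))
    · exact isHermitian_zero
  have hTbP : Tb.PosSemidef := by
    rw [hTb]
    refine covMat_psd _ ⟨pb, tb⟩ ?_
    rintro (i | j | k)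
    · exact one_kron_herm (red1_herm hc2.isHermitian (hA i))
    · exact isHermitian_zero
    · exact kron_one_herm (red2_herm ha1.isHermitian (hC k))
  have hTaP : Ta.PosSemidef := by
    rw [hTa]
    refine covMat_psd _ ⟨pa, ta⟩ ?_
    rintro (i | j | k)
    · exact isHermitian_zero
    · exact kron_one_herm (red2_herm hc1.isHermitian (hB j))
    · exact one_kron_herm (red1_herm hb2.isHermitian (hC k))
  have hΓP : Γ.PosSemidef := by
    rw [hΓ]
    refine covMat_psd _ ⟨?_, ?_⟩ ?_
    · exact pb.kronecker (pc.kronecker pa)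
    · simp [btnState, trace_kronecker, ta, tb, tc]
    · rintro (i | j | k)
      · exact embedA_herm (hA i)
      · exact embedB_herm (hB j)
      · exact embedC_herm (hC k)
  have hRH : R.IsHermitian := by
    rw [hR]
    exact ((hΓP.isHermitian.sub hTcP.isHermitian).sub hTbP.isHermitian).sub hTaP.isHermitian
  have rAB : ∀ i j, R (.inl i) (.inr (.inl j)) = 0 := by
    intro i j
    simp [hR, hΓ, hTc, hTb, hTa, covMat, exAB, exA ta, exB tb, trace_left, trace_right, ex_red1,
      ex_red2]
  have rAC : ∀ i k, R (.inl i) (.inr (.inr k)) = 0 := by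
    intro i k
    simp [hR, hΓ, hTc, hTb, hTa, covMat, exAC, exA ta, exC tc, trace_left, trace_right, ex_red1,
      ex_red2]
  have rBC : ∀ j k, R (.inr (.inl j)) (.inr (.inr k)) = 0 := by
    intro j k
    simp [hR, hΓ, hTc, hTb, hTa, covMat, exBC, exB tb, exC tc, trace_left, trace_right, ex_red1,
      ex_red2]
  have rBA : ∀ i j, R (.inr (.inl j)) (.inl i) = 0 := by
    intro i j
    rw [← hRH.apply, rAB, star_zero]
  have rCA : ∀ i j, R (.inr (.inr j)) (.inl i) = 0 := by
    intro i j
    rw [← hRH.apply, rAC, star_zero]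
  have rCB : ∀ i j, R (.inr (.inr j)) (.inr (.inl i)) = 0 := by
    intro i j
    rw [← hRH.apply, rBC, star_zero]
  have gA := gram_psd (Sum.elim (fun i => cen (ptrace₁ ρb) (ptrace₂ ρc) (A i))
      (fun _ : Fin kB ⊕ Fin kC => 0)) (hb1.kronecker hc2) (by
    rintro (i | j)
    · exact cen_herm hb1.isHermitian hc2.isHermitian (hA i)
    · exact isHermitian_zero)
  have gB := gram_psd (Sum.elim (fun _ : Fin kA => 0) (Sum.elim
      (fun i => cen (ptrace₁ ρc) (ptrace₂ ρa) (B i)) (fun _ : Fin kC => 0)))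
      (hc1.kronecker ha2) (by
    rintro (i | j | k)
    · exact isHermitian_zero
    · exact cen_herm hc1.isHermitian ha2.isHermitian (hB j)
    · exact isHermitian_zero)
  have gC := gram_psd (Sum.elim (fun _ : Fin kA => 0) (Sum.elim (fun _ : Fin kB => 0)
      (fun i => cen (ptrace₁ ρa) (ptrace₂ ρb) (C i))))
      (ha1.kronecker hb2) (by
    rintro (i | j | k)
    · exact isHermitian_zero
    · exact isHermitian_zero
    · exact cen_herm ha1.isHermitian hb2.isHermitian (hC k))
  refine ⟨?_, ?_, hTcP, hTbP, hTaP, ?_⟩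
  · rintro (i | j | k) (i' | j' | k') h
    · exact absurd rfl h
    · exact rAB _ _
    · exact rAC _ _
    · exact rBA _ _
    · exact absurd rfl h
    · exact rBC _ _
    · exact rCA _ _
    · exact rCB _ _
    · exact absurd rfl h
  · convert (gA.add gB).add gC using 1
    ext p q
    rcases p with i | j | k <;> rcases q with i' | j' | k'
    · simp only [hR, hΓ, hTc, hTb, hTa, covMat, Matrix.sub_apply, Matrix.add_apply, of_apply,
        Sum.elim_inl, Sum.elim_inr, zero_mul, mul_zero, trace_zero, embedA_mul, exA ta,
        kron_one_mul, one_kron_mul, trace_left, trace_right, ex_red1, ex_red2,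
        cen_gram _ _ sb1 sc2]
      ring
    · simp [rAB]
    · simp [rAC]
    · simp [rBA]
    · simp only [hR, hΓ, hTc, hTb, hTa, covMat, Matrix.sub_apply, Matrix.add_apply, of_apply,
        Sum.elim_inl, Sum.elim_inr, zero_mul, mul_zero, trace_zero, embedB_mul, exB tb,
        kron_one_mul, one_kron_mul, trace_left, trace_right, ex_red1, ex_red2,
        cen_gram _ _ sc1 sa2]
      ring
    · simp [rBC]
    · simp [rCA]
    · simp [rCB]
    · simp only [hR, hΓ, hTc, hTb, hTa, covMat, Matrix.sub_apply, Matrix.add_apply, of_apply,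
        Sum.elim_inl, Sum.elim_inr, zero_mul, mul_zero, trace_zero, embedC_mul, exC tc,
        kron_one_mul, one_kron_mul, trace_left, trace_right, ex_red1, ex_red2,
        cen_gram _ _ sa1 sb2]
      ring
  · rw [hR]
    abel
end
end

section
/- Let |GHZ⟩ = (|000⟩ + |111⟩)/√2 in (C²)^⊗3 and, for 1/2 < v ≤ 1, let ρ(v) = v|GHZ⟩⟨GHZ| + (1−v)·1₈/8. Then ρ(v) is not a triangle network state with local channels: there exist no d ≥ 1, density matrices ρ_a, ρ_b, ρ_c on C^d ⊗ C^d and quantum channels E_A, E_B, E_C from (C^d ⊗ C^d)-matrices to 2×2 matrices such that (E_A ⊗ E_B ⊗ E_C)(ρ_b ⊗ ρ_c ⊗ ρ_a) = ρ(v), where the tensor factors are arranged in the basic triangle network ordering. -/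
open Matrix Kronecker BigOperators
open scoped ComplexOrder

noncomputable section

/-- The global Kraus operator `K_A ⊗ K_B ⊗ K_C`, mapping the six-factor
triangle-network space (ordered C₂, A₁, A₂, B₁, B₂, C₁) to the output space
of the three parties. -/
def globalKraus {d nA nB nC : ℕ}
    (KA : Matrix (Fin nA) (D2 d) ℂ) (KB : Matrix (Fin nB) (D2 d) ℂ)
    (KC : Matrix (Fin nC) (D2 d) ℂ) :
    Matrix (Fin nA × Fin nB × Fin nC) (TriIdx d) ℂ :=
  Matrix.of fun o i =>
    KA o.1 (i.1.2, i.2.1.1) * KB o.2.1 (i.2.1.2, i.2.2.1) * KC o.2.2 (i.2.2.2, i.1.1)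

/-- The triangle network state with local channels,
`(E_A ⊗ E_B ⊗ E_C)(ρ_BTN)`, with the channels given by Kraus operators. -/
def ctnState {d nA nB nC LA LB LC : ℕ}
    (ρa ρb ρc : Matrix (D2 d) (D2 d) ℂ)
    (KA : Fin LA → Matrix (Fin nA) (D2 d) ℂ)
    (KB : Fin LB → Matrix (Fin nB) (D2 d) ℂ)
    (KC : Fin LC → Matrix (Fin nC) (D2 d) ℂ) :
    Matrix (Fin nA × Fin nB × Fin nC) (Fin nA × Fin nB × Fin nC) ℂ :=
  ∑ l, ∑ m, ∑ n,
    globalKraus (KA l) (KB m) (KC n) * btnState ρa ρb ρc *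
      (globalKraus (KA l) (KB m) (KC n))ᴴ

/-- Embed an observable of Alice into the tripartite output space. -/
def outA {nA nB nC : ℕ} (M : Matrix (Fin nA) (Fin nA) ℂ) :
    Matrix (Fin nA × Fin nB × Fin nC) (Fin nA × Fin nB × Fin nC) ℂ :=
  M ⊗ₖ (1 : Matrix (Fin nB × Fin nC) (Fin nB × Fin nC) ℂ)

/-- Embed an observable of Bob into the tripartite output space. -/
def outB {nA nB nC : ℕ} (M : Matrix (Fin nB) (Fin nB) ℂ) :
    Matrix (Fin nA × Fin nB × Fin nC) (Fin nA × Fin nB × Fin nC) ℂ :=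
  Matrix.of fun p q => if p.1 = q.1 ∧ p.2.2 = q.2.2 then M p.2.1 q.2.1 else 0

/-- Embed an observable of Charlie into the tripartite output space. -/
def outC {nA nB nC : ℕ} (M : Matrix (Fin nC) (Fin nC) ℂ) :
    Matrix (Fin nA × Fin nB × Fin nC) (Fin nA × Fin nB × Fin nC) ℂ :=
  (1 : Matrix (Fin nA) (Fin nA) ℂ) ⊗ₖ ((1 : Matrix (Fin nB) (Fin nB) ℂ) ⊗ₖ M)

/-- The three-qubit GHZ state vector `(|000⟩ + |111⟩)/√2`. -/
def ghzVec : Fin 2 × Fin 2 × Fin 2 → ℂ := fun i =>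
  if i = (0, 0, 0) ∨ i = (1, 1, 1) then ((Real.sqrt 2)⁻¹ : ℝ) else 0

/-- The GHZ state mixed with white noise, `v |GHZ⟩⟨GHZ| + (1−v) 1/8`. -/
def ghzNoisy (v : ℝ) : Matrix (Fin 2 × Fin 2 × Fin 2) (Fin 2 × Fin 2 × Fin 2) ℂ :=
  (v : ℂ) • vecMulVec ghzVec (star ghzVec) +
    ((1 - v : ℝ) : ℂ) • ((8 : ℂ)⁻¹ • (1 : Matrix (Fin 2 × Fin 2 × Fin 2) (Fin 2 × Fin 2 × Fin 2) ℂ))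

namespace BTN

/-- Product of three local observables on the triangle network space. -/
def T {d : ℕ} (X Y W : Matrix (D2 d) (D2 d) ℂ) : Matrix (TriIdx d) (TriIdx d) ℂ :=
  Matrix.of fun p q => X (p.1.2, p.2.1.1) (q.1.2, q.2.1.1) *
    Y (p.2.1.2, p.2.2.1) (q.2.1.2, q.2.2.1) * W (p.2.2.2, p.1.1) (q.2.2.2, q.1.1)

def F {d : ℕ} (ρa ρb ρc X Y W : Matrix (D2 d) (D2 d) ℂ) : ℂ :=
  (T X Y W * btnState ρa ρb ρc).trace

def heis {d L : ℕ} (K : Fin L → Matrix (Fin 2) (D2 d) ℂ) (P : Matrix (Fin 2) (Fin 2) ℂ) :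
    Matrix (D2 d) (D2 d) ℂ := ∑ l, (K l)ᴴ * P * K l

lemma kraus_T {d : ℕ} (KA KB KC : Matrix (Fin 2) (D2 d) ℂ) (P Q R : Matrix (Fin 2) (Fin 2) ℂ) :
    (globalKraus KA KB KC)ᴴ * (P ⊗ₖ (Q ⊗ₖ R)) * globalKraus KA KB KC =
      T (KAᴴ * P * KA) (KBᴴ * Q * KB) (KCᴴ * R * KC) := by
  ext p q
  simp only [globalKraus, T, Matrix.mul_apply, Fintype.sum_prod_type, Fin.sum_univ_two,
    Matrix.of_apply, Matrix.conjTranspose_apply, Matrix.kroneckerMap_apply, star_mul']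
  ring

lemma T_sum {d LA LB LC : ℕ} (X : Fin LA → Matrix (D2 d) (D2 d) ℂ)
    (Y : Fin LB → Matrix (D2 d) (D2 d) ℂ) (W : Fin LC → Matrix (D2 d) (D2 d) ℂ) :
    ∑ l, ∑ m, ∑ n, T (X l) (Y m) (W n) = T (∑ l, X l) (∑ l, Y l) (∑ l, W l) := by
  ext p q
  simp only [T, Matrix.sum_apply, Matrix.of_apply, Finset.sum_mul, Finset.mul_sum]
  rw [Finset.sum_comm' (t' := Finset.univ) (s' := fun _ => Finset.univ) (by simp)]
  rw [Finset.sum_comm]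
  refine Eq.trans ?_ Finset.sum_comm
  conv_rhs => enter [2, l]; rw [Finset.sum_comm]
  try rw [Finset.sum_comm]

lemma trace_ctn {d LA LB LC : ℕ} (ρa ρb ρc : Matrix (D2 d) (D2 d) ℂ)
    (KA : Fin LA → Matrix (Fin 2) (D2 d) ℂ) (KB : Fin LB → Matrix (Fin 2) (D2 d) ℂ)
    (KC : Fin LC → Matrix (Fin 2) (D2 d) ℂ) (P Q R : Matrix (Fin 2) (Fin 2) ℂ) :
    ((P ⊗ₖ (Q ⊗ₖ R)) * ctnState ρa ρb ρc KA KB KC).trace =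
      F ρa ρb ρc (heis KA P) (heis KB Q) (heis KC R) := by
  unfold F heis ctnState
  rw [← T_sum]
  simp only [← kraus_T, Finset.mul_sum, Finset.sum_mul, Matrix.trace_sum]
  refine Finset.sum_congr rfl fun l _ => Finset.sum_congr rfl fun m _ =>
    Finset.sum_congr rfl fun n _ => ?_
  rw [← Matrix.mul_assoc, ← Matrix.mul_assoc, Matrix.trace_mul_comm]
  simp only [Matrix.mul_assoc]

lemma F_cyc {d : ℕ} (ρa ρb ρc X Y W : Matrix (D2 d) (D2 d) ℂ) :
    F ρa ρb ρc X Y W = F ρb ρc ρa Y W X := by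
  unfold F
  simp only [Matrix.trace, Matrix.diag, Matrix.mul_apply]
  let e : TriIdx d ≃ TriIdx d :=
    { toFun := fun p => (p.2.1, p.2.2, p.1)
      invFun := fun p => (p.2.2, p.1, p.2.1)
      left_inv := fun p => rfl
      right_inv := fun p => rfl }
  refine Fintype.sum_equiv e _ _ fun p => Fintype.sum_equiv e _ _ fun q => ?_
  simp only [T, btnState, e, Equiv.coe_fn_mk, Matrix.of_apply, Matrix.kroneckerMap_apply]
  ring

set_option linter.unusedSectionVars false
section loc
variable {m n : Type*} [Fintype m] [Fintype n] [DecidableEq m] [DecidableEq n]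

lemma ptrace₂_psd {M : Matrix (m × n) (m × n) ℂ} (h : M.PosSemidef) : (ptrace₂ M).PosSemidef := by
  have : ptrace₂ M = ∑ k, M.submatrix (fun i => (i, k)) (fun i => (i, k)) := by
    ext i j; simp [ptrace₂, Matrix.sum_apply]
  rw [this]
  exact Matrix.posSemidef_sum _ fun k _ => h.submatrix _

lemma ptrace₁_psd {M : Matrix (m × n) (m × n) ℂ} (h : M.PosSemidef) : (ptrace₁ M).PosSemidef := by
  have : ptrace₁ M = ∑ k, M.submatrix (fun i => (k, i)) (fun i => (k, i)) := by
    ext i j; simp [ptrace₁, Matrix.sum_apply]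
  rw [this]
  exact Matrix.posSemidef_sum _ fun k _ => h.submatrix _

lemma trace_ptrace₂ (M : Matrix (m × n) (m × n) ℂ) : (ptrace₂ M).trace = M.trace := by
  simp [ptrace₂, Matrix.trace, Fintype.sum_prod_type]

lemma trace_ptrace₁ (M : Matrix (m × n) (m × n) ℂ) : (ptrace₁ M).trace = M.trace := by
  simp [ptrace₁, Matrix.trace, Fintype.sum_prod_type]
  rw [Finset.sum_comm]

lemma ptrace₂_mul (M : Matrix (m × n) (m × n) ℂ) (s : Matrix m m ℂ) :
    ptrace₂ (M * (s ⊗ₖ (1 : Matrix n n ℂ))) = ptrace₂ M * s := by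
  ext i j
  simp only [ptrace₂, Matrix.of_apply, Matrix.mul_apply, Fintype.sum_prod_type,
    Matrix.kroneckerMap_apply, Matrix.one_apply, mul_ite, mul_one, mul_zero,
    Finset.sum_ite_eq', Finset.mem_univ, if_true, Finset.sum_mul]
  rw [Finset.sum_comm]

lemma ptrace₁_mul (M : Matrix (m × n) (m × n) ℂ) (s : Matrix n n ℂ) :
    ptrace₁ (M * ((1 : Matrix m m ℂ) ⊗ₖ s)) = ptrace₁ M * s := by
  ext i j
  simp only [ptrace₁, Matrix.of_apply, Matrix.mul_apply, Fintype.sum_prod_type_right,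
    Matrix.kroneckerMap_apply, Matrix.one_apply, ite_mul, one_mul, zero_mul, mul_ite, mul_zero,
    Finset.sum_ite_eq', Finset.mem_univ, if_true, Finset.sum_mul]
  rw [Finset.sum_comm]

lemma pos_real {k : Type*} [Fintype k] (N : Matrix k m ℂ) {ρ : Matrix m m ℂ} (h : ρ.PosSemidef) :
    0 ≤ (Nᴴ * N * ρ).trace.re := by
  have h1 := (h.mul_mul_conjTranspose_same N).trace_nonneg
  have h2 : (Nᴴ * N * ρ).trace = (N * ρ * Nᴴ).trace := by
    rw [Matrix.mul_assoc, Matrix.trace_mul_comm]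
  rw [h2]
  exact (Complex.le_def.1 h1).1

lemma herm2 {M : Matrix (m × n) (m × n) ℂ} {t : Matrix n n ℂ} (hM : M.IsHermitian)
    (ht : t.IsHermitian) : (ptrace₂ (M * ((1 : Matrix m m ℂ) ⊗ₖ t))).IsHermitian := by
  ext i j
  simp only [ptrace₂, Matrix.of_apply, Matrix.conjTranspose_apply, Matrix.mul_apply,
    Fintype.sum_prod_type_right,
    Matrix.kroneckerMap_apply, Matrix.one_apply, ite_mul, one_mul, zero_mul, mul_ite, mul_zero,
    Finset.sum_ite_eq', Finset.mem_univ, if_true, star_sum, star_mul', hM.apply, ht.apply]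
  rw [Finset.sum_comm]

lemma herm1 {M : Matrix (m × n) (m × n) ℂ} {s : Matrix m m ℂ} (hM : M.IsHermitian)
    (hs : s.IsHermitian) : (ptrace₁ (M * (s ⊗ₖ (1 : Matrix n n ℂ)))).IsHermitian := by
  ext i j
  simp only [ptrace₁, Matrix.of_apply, Matrix.conjTranspose_apply, Matrix.mul_apply,
    Fintype.sum_prod_type,
    Matrix.kroneckerMap_apply, Matrix.one_apply, mul_one, mul_ite, mul_zero,
    Finset.sum_ite_eq', Finset.mem_univ, if_true, star_sum, star_mul', hM.apply, hs.apply]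
  rw [Finset.sum_comm]

lemma kron_split (s : Matrix m m ℂ) (t : Matrix n n ℂ) :
    s ⊗ₖ t = ((1 : Matrix m m ℂ) ⊗ₖ t) * (s ⊗ₖ (1 : Matrix n n ℂ)) := by
  rw [← Matrix.mul_kronecker_mul]; simp

lemma kron_split_symm (s : Matrix m m ℂ) (t : Matrix n n ℂ) :
    s ⊗ₖ t = (s ⊗ₖ (1 : Matrix n n ℂ)) * ((1 : Matrix m m ℂ) ⊗ₖ t) := by
  rw [← Matrix.mul_kronecker_mul]; simp

/-- Local variance inequality. -/
lemma local_ineq {M : Matrix (m × n) (m × n) ℂ} {s : Matrix m m ℂ} {t : Matrix n n ℂ}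
    (hM : M.IsHermitian) (hs : s.PosSemidef) (ht : t.PosSemidef)
    (h0 : (M * (s ⊗ₖ t)).trace = 0) (A1 : Matrix m m ℂ) (A2 : Matrix n n ℂ)
    (hA1 : A1 = ptrace₂ (M * ((1 : Matrix m m ℂ) ⊗ₖ t)))
    (hA2 : A2 = ptrace₁ (M * (s ⊗ₖ (1 : Matrix n n ℂ)))) (hs1 : s.trace = 1) (ht1 : t.trace = 1) :
    (A1 * A1 * s).trace.re + (A2 * A2 * t).trace.re ≤ (M * M * (s ⊗ₖ t)).trace.re := by
  have e1 : ∀ X : Matrix m m ℂ, (M * (X ⊗ₖ t)).trace = (A1 * X).trace := by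
    intro X
    rw [kron_split, ← Matrix.mul_assoc, ← trace_ptrace₂, ptrace₂_mul, hA1]
  have e2 : ∀ X : Matrix n n ℂ, (M * (s ⊗ₖ X)).trace = (A2 * X).trace := by
    intro X
    rw [kron_split_symm, ← Matrix.mul_assoc, ← trace_ptrace₁, ptrace₁_mul, hA2]
  have z1 : (A1 * s).trace = 0 := by rw [← e1, h0]
  have z2 : (A2 * t).trace = 0 := by rw [← e2, h0]
  have H1 : A1ᴴ = A1 := by rw [hA1]; exact herm2 hM ht.1
  have H2 : A2ᴴ = A2 := by rw [hA2]; exact herm1 hM hs.1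
  have key := pos_real (M - A1 ⊗ₖ (1 : Matrix n n ℂ) - (1 : Matrix m m ℂ) ⊗ₖ A2) (hs.kronecker ht)
  have HM : Mᴴ = M := hM
  have c1 : ((A1 ⊗ₖ (1 : Matrix n n ℂ)) * M * (s ⊗ₖ t)).trace = (A1 * A1 * s).trace := by
    rw [Matrix.mul_assoc, Matrix.trace_mul_comm, Matrix.mul_assoc, ← Matrix.mul_kronecker_mul,
      mul_one, e1, ← Matrix.mul_assoc, Matrix.trace_mul_comm, ← Matrix.mul_assoc]
  have c2 : (((1 : Matrix m m ℂ) ⊗ₖ A2) * M * (s ⊗ₖ t)).trace = (A2 * A2 * t).trace := by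
    rw [Matrix.mul_assoc, Matrix.trace_mul_comm, Matrix.mul_assoc, ← Matrix.mul_kronecker_mul,
      mul_one, e2, ← Matrix.mul_assoc, Matrix.trace_mul_comm, ← Matrix.mul_assoc]
  have c3 : (M * (A1 ⊗ₖ (1 : Matrix n n ℂ)) * (s ⊗ₖ t)).trace = (A1 * A1 * s).trace := by
    rw [Matrix.mul_assoc, ← Matrix.mul_kronecker_mul, one_mul, e1, ← Matrix.mul_assoc]
  have c4 : (M * ((1 : Matrix m m ℂ) ⊗ₖ A2) * (s ⊗ₖ t)).trace = (A2 * A2 * t).trace := by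
    rw [Matrix.mul_assoc, ← Matrix.mul_kronecker_mul, one_mul, e2, ← Matrix.mul_assoc]
  simp only [Matrix.conjTranspose_sub, Matrix.conjTranspose_kronecker, H1, H2, HM,
    Matrix.conjTranspose_one, Matrix.sub_mul, Matrix.mul_sub, Matrix.trace_sub, c1, c2, c3, c4] at key
  simp only [← Matrix.mul_kronecker_mul, Matrix.trace_kronecker, mul_one, one_mul, z1, z2,
    hs1, ht1, Complex.sub_re, mul_zero, Complex.zero_re] at key
  linarith

lemma pair_ineq {ρ : Matrix (m × n) (m × n) ℂ} (hρ : ρ.PosSemidef) {A : Matrix m m ℂ}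
    {B : Matrix n n ℂ} (hA : A.IsHermitian) (hB : B.IsHermitian) :
    2 * ((A ⊗ₖ B) * ρ).trace.re ≤ (A * A * ptrace₂ ρ).trace.re + (B * B * ptrace₁ ρ).trace.re := by
  have key := pos_real (A ⊗ₖ (1 : Matrix n n ℂ) - (1 : Matrix m m ℂ) ⊗ₖ B) hρ
  have HA : Aᴴ = A := hA
  have HB : Bᴴ = B := hB
  have c1 : ((A * A) ⊗ₖ (1 : Matrix n n ℂ) * ρ).trace = (A * A * ptrace₂ ρ).trace := by
    rw [Matrix.trace_mul_comm, ← trace_ptrace₂, ptrace₂_mul, Matrix.trace_mul_comm]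
  have c2 : ((1 : Matrix m m ℂ) ⊗ₖ (B * B) * ρ).trace = (B * B * ptrace₁ ρ).trace := by
    rw [Matrix.trace_mul_comm, ← trace_ptrace₁, ptrace₁_mul, Matrix.trace_mul_comm]
  simp only [Matrix.conjTranspose_sub, Matrix.conjTranspose_kronecker, HA, HB,
    Matrix.conjTranspose_one, Matrix.sub_mul, Matrix.mul_sub, Matrix.trace_sub,
    ← Matrix.mul_kronecker_mul, mul_one, one_mul, c1, c2, Complex.sub_re] at key
  linarith

end loc

/-- Kadison inequality for the Heisenberg-evolved observable. -/
lemma heis_sq {d L : ℕ} (K : Fin L → Matrix (Fin 2) (D2 d) ℂ) (hK : ∑ l, (K l)ᴴ * K l = 1)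
    {Z : Matrix (Fin 2) (Fin 2) ℂ} (hZ : Zᴴ = Z) (hZ2 : Z * Z = 1)
    {ρ : Matrix (D2 d) (D2 d) ℂ} (hρ : ρ.PosSemidef) (h1 : ρ.trace = 1) :
    (heis K Z * heis K Z * ρ).trace.re ≤ 1 := by
  set M := heis K Z with hM
  have HM : Mᴴ = M := by
    rw [hM, heis, Matrix.conjTranspose_sum]
    refine Finset.sum_congr rfl fun l _ => ?_
    simp [Matrix.conjTranspose_mul, hZ, Matrix.mul_assoc]
  have e : ∑ l, (Z * K l - K l * M)ᴴ * (Z * K l - K l * M) = 1 - M * M := by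
    have : ∀ l, (Z * K l - K l * M)ᴴ * (Z * K l - K l * M) =
        (K l)ᴴ * K l - ((K l)ᴴ * Z * K l) * M - M * ((K l)ᴴ * Z * K l) + M * ((K l)ᴴ * K l) * M := by
      intro l
      have : (K l)ᴴ * Z * (Z * K l) = (K l)ᴴ * K l := by
        rw [Matrix.mul_assoc, ← Matrix.mul_assoc Z, hZ2, Matrix.one_mul]
      simp only [Matrix.conjTranspose_sub, Matrix.conjTranspose_mul, hZ, HM, Matrix.sub_mul,
        Matrix.mul_sub, this]
      simp only [Matrix.mul_assoc]
      abel
    simp only [this, Finset.sum_add_distrib, Finset.sum_sub_distrib, ← Finset.sum_mul,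
      ← Finset.mul_sum, hK]
    rw [show ∑ l, (K l)ᴴ * Z * K l = M from rfl]
    simp
  have : 0 ≤ ((1 - M * M) * ρ).trace.re := by
    rw [← e, Finset.sum_mul, Matrix.trace_sum, Complex.re_sum]
    exact Finset.sum_nonneg fun l _ => pos_real _ hρ
  rw [Matrix.sub_mul, Matrix.trace_sub, Matrix.one_mul, h1] at this
  simpa using this

lemma heis_herm {d L : ℕ} (K : Fin L → Matrix (Fin 2) (D2 d) ℂ)
    {Z : Matrix (Fin 2) (Fin 2) ℂ} (hZ : Zᴴ = Z) : (heis K Z).IsHermitian := by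
  unfold Matrix.IsHermitian
  rw [heis, Matrix.conjTranspose_sum]
  refine Finset.sum_congr rfl fun l _ => ?_
  simp [Matrix.conjTranspose_mul, hZ, Matrix.mul_assoc]

lemma F_pair {d : ℕ} (ρa ρb ρc X Y : Matrix (D2 d) (D2 d) ℂ) :
    F ρa ρb ρc X Y 1 = ((ptrace₁ (X * (ptrace₁ ρb ⊗ₖ (1 : Matrix (Fin d) (Fin d) ℂ))) ⊗ₖ
      ptrace₂ (Y * ((1 : Matrix (Fin d) (Fin d) ℂ) ⊗ₖ ptrace₂ ρa))) * ρc).trace := by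
  unfold F
  simp only [T, btnState, ptrace₁, ptrace₂, Matrix.trace, Matrix.diag, Matrix.mul_apply,
    Fintype.sum_prod_type, Matrix.of_apply, Matrix.kroneckerMap_apply, Matrix.one_apply,
    Prod.mk.injEq, ite_and, mul_ite, ite_mul, mul_one, one_mul, mul_zero, zero_mul,
    Finset.sum_ite_eq, Finset.sum_ite_eq', Finset.mem_univ, if_true, Finset.sum_const_zero,
    Finset.sum_ite_irrel]
  simp only [Finset.sum_mul, Finset.mul_sum]
  simp only [← Fintype.sum_prod_type']
  refine Fintype.sum_equiv
    { toFun := fun (c2, a1, a2, b1, b2, c1, a1p, a2p, b1p, b2p) =>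
        (a2, b1, a2p, b1p, b2, b2p, c1, a1, a1p, c2)
      invFun := fun (a2, b1, a2p, b1p, b2, b2p, c1, a1, a1p, c2) =>
        (c2, a1, a2, b1, b2, c1, a1p, a2p, b1p, b2p)
      left_inv := fun _ => rfl
      right_inv := fun _ => rfl } _ _ fun x => ?_
  simp only [Equiv.coe_fn_mk]
  ring

lemma F_one {d : ℕ} (ρa ρb ρc X : Matrix (D2 d) (D2 d) ℂ) (ha : ρa.trace = 1) :
    F ρa ρb ρc X 1 1 = (X * (ptrace₁ ρb ⊗ₖ ptrace₂ ρc)).trace := by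
  rw [F_pair]
  have : ptrace₂ ((1 : Matrix (D2 d) (D2 d) ℂ) * ((1 : Matrix (Fin d) (Fin d) ℂ) ⊗ₖ ptrace₂ ρa))
      = 1 := by
    ext i j
    simp only [one_mul, ptrace₂, Matrix.of_apply, Matrix.kroneckerMap_apply]
    change ∑ k, (1 : Matrix (Fin d) (Fin d) ℂ) i j * ∑ l, ρa (k, l) (k, l) = _
    rw [← Finset.mul_sum]
    have : ∑ k, ∑ l, ρa (k, l) (k, l) = 1 := by
      rw [← ha]; simp [Matrix.trace, Fintype.sum_prod_type]
    rw [this, mul_one]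
  rw [this, Matrix.trace_mul_comm, ← trace_ptrace₂, ptrace₂_mul, Matrix.trace_mul_comm,
    ← ptrace₁_mul, trace_ptrace₁, Matrix.mul_assoc, ← Matrix.mul_kronecker_mul, mul_one, one_mul]

def Z : Matrix (Fin 2) (Fin 2) ℂ := !![1, 0; 0, -1]

lemma Z_herm : Zᴴ = Z := by
  ext i j; fin_cases i <;> fin_cases j <;> simp [Z]

lemma Z_sq : Z * Z = 1 := by
  ext i j; fin_cases i <;> fin_cases j <;> simp [Z]

lemma sqrt_c : ((Real.sqrt 2 : ℝ) : ℂ)⁻¹ * ((Real.sqrt 2 : ℝ) : ℂ)⁻¹ = 1 / 2 := by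
  rw [← mul_inv, ← Complex.ofReal_mul, Real.mul_self_sqrt (by norm_num)]; norm_num

lemma ghz_diag (v : ℝ) (P Q R : Matrix (Fin 2) (Fin 2) ℂ) (hP : P 0 1 = 0 ∧ P 1 0 = 0) :
    ((P ⊗ₖ (Q ⊗ₖ R)) * ghzNoisy v).trace = 
      v / 2 * (P 0 0 * Q 0 0 * R 0 0 + P 1 1 * Q 1 1 * R 1 1) +
      (1 - v) / 8 * (P.trace * Q.trace * R.trace) := by
  obtain ⟨h1, h2⟩ := hP
  simp only [ghzNoisy, Matrix.mul_add, Matrix.trace_add, Matrix.mul_smul, Matrix.trace_smul,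
    mul_one, Matrix.trace_kronecker, smul_eq_mul]
  have : ((P ⊗ₖ (Q ⊗ₖ R)) * vecMulVec ghzVec (star ghzVec)).trace =
     1 / 2 * (P 0 0 * Q 0 0 * R 0 0 + P 1 1 * Q 1 1 * R 1 1) := by
    simp [Matrix.trace, Matrix.mul_apply, Fintype.sum_prod_type, vecMulVec_apply, ghzVec, h1, h2,
      sqrt_c]
    ring
  rw [this]
  push_cast
  ring

/-- One-party bound. -/
lemma party {d L : ℕ} (K : Fin L → Matrix (Fin 2) (D2 d) ℂ) (hK : ∑ l, (K l)ᴴ * K l = 1)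
    {ρb ρc : Matrix (D2 d) (D2 d) ℂ} (hb : IsDensity ρb) (hc : IsDensity ρc)
    (h0 : (heis K Z * (ptrace₁ ρb ⊗ₖ ptrace₂ ρc)).trace = 0)
    (A1 A2 : Matrix (Fin d) (Fin d) ℂ)
    (h1 : A1 = ptrace₂ (heis K Z * ((1 : Matrix (Fin d) (Fin d) ℂ) ⊗ₖ ptrace₂ ρc)))
    (h2 : A2 = ptrace₁ (heis K Z * (ptrace₁ ρb ⊗ₖ (1 : Matrix (Fin d) (Fin d) ℂ)))) :
    (A1 * A1 * ptrace₁ ρb).trace.re + (A2 * A2 * ptrace₂ ρc).trace.re ≤ 1 ∧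
      A1.IsHermitian ∧ A2.IsHermitian := by
  have pb := ptrace₁_psd hb.1
  have pc := ptrace₂_psd hc.1
  have tb : (ptrace₁ ρb).trace = 1 := by rw [trace_ptrace₁, hb.2]
  have tc : (ptrace₂ ρc).trace = 1 := by rw [trace_ptrace₂, hc.2]
  refine ⟨(local_ineq (heis_herm K Z_herm) pb pc h0 A1 A2 h1 h2 tb tc).trans
    (heis_sq K hK Z_herm Z_sq (pb.kronecker pc) ?_), ?_, ?_⟩
  · rw [Matrix.trace_kronecker, tb, tc, mul_one]
  · rw [h1]; exact herm2 (heis_herm K Z_herm) pc.1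
  · rw [h2]; exact herm1 (heis_herm K Z_herm) pb.1

end BTN

open BTN in
/-- For `1/2 < v ≤ 1`, the noisy GHZ state
`v|GHZ⟩⟨GHZ| + (1−v)·1/8` cannot be prepared in the triangle network with
local channels. -/
theorem stmt12 (v : ℝ) (hv₁ : 1 / 2 < v) (hv₂ : v ≤ 1) :
    ¬ ∃ (d : ℕ), 1 ≤ d ∧
      ∃ (LA LB LC : ℕ)
        (ρa ρb ρc : Matrix (D2 d) (D2 d) ℂ)
        (KA : Fin LA → Matrix (Fin 2) (D2 d) ℂ)
        (KB : Fin LB → Matrix (Fin 2) (D2 d) ℂ)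
        (KC : Fin LC → Matrix (Fin 2) (D2 d) ℂ),
        IsDensity ρa ∧ IsDensity ρb ∧ IsDensity ρc ∧
        (∑ l, (KA l)ᴴ * KA l = 1) ∧
        (∑ l, (KB l)ᴴ * KB l = 1) ∧
        (∑ l, (KC l)ᴴ * KC l = 1) ∧
        ctnState ρa ρb ρc KA KB KC = ghzNoisy v := by
  rintro ⟨d, -, LA, LB, LC, ρa, ρb, ρc, KA, KB, KC, ha, hb, hc, hA, hB, hC, h⟩
  have tr := fun P Q R => trace_ctn ρa ρb ρc KA KB KC P Q R
  rw [h] at tr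
  have oA : heis KA 1 = 1 := by simpa [heis] using hA
  have oB : heis KB 1 = 1 := by simpa [heis] using hB
  have oC : heis KC 1 = 1 := by simpa [heis] using hC
  have dZ : Z 0 1 = 0 ∧ Z 1 0 = 0 := by simp [Z]
  have d1 : (1 : Matrix (Fin 2) (Fin 2) ℂ) 0 1 = 0 ∧ (1 : Matrix (Fin 2) (Fin 2) ℂ) 1 0 = 0 := by
    simp
  have tZ : Z.trace = 0 := by simp [Z, Matrix.trace]
  have z0 : Z 0 0 = 1 := by simp [Z]
  have z1 : Z 1 1 = -1 := by simp [Z]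
  -- one-party expectation values
  have eA := tr Z 1 1
  have eB := tr 1 Z 1
  have eC := tr 1 1 Z
  have eAB := tr Z Z 1
  have eBC := tr 1 Z Z
  have eCA := tr Z 1 Z
  rw [ghz_diag v _ _ _ dZ] at eA eAB eCA
  rw [ghz_diag v _ _ _ d1] at eB eC eBC
  simp only [oA, oB, oC, tZ, z0, z1, Matrix.one_apply_eq] at eA eB eC eAB eBC eCA
  rw [F_one _ _ _ _ ha.2] at eA
  rw [F_cyc, F_one _ _ _ _ hb.2] at eB
  rw [F_cyc, F_cyc, F_one _ _ _ _ hc.2] at eC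
  rw [F_pair] at eAB
  rw [F_cyc, F_pair] at eBC
  rw [F_cyc, F_cyc, F_pair] at eCA
  obtain ⟨pA, hA1, hA2⟩ := party KA hA hb hc (by rw [← eA]; ring) _ _ rfl rfl
  obtain ⟨pB, hB1, hB2⟩ := party KB hB hc ha (by rw [← eB]; ring) _ _ rfl rfl
  obtain ⟨pC, hC1, hC2⟩ := party KC hC ha hb (by rw [← eC]; ring) _ _ rfl rfl
  have qAB := pair_ineq hc.1 hA2 hB1
  have qBC := pair_ineq ha.1 hB2 hC1
  have qCA := pair_ineq hb.1 hC2 hA1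
  rw [← eAB] at qAB
  rw [← eBC] at qBC
  rw [← eCA] at qCA
  have r : (v / 2 * (1 * 1 * 1 + 1 * 1 * 1) : ℂ) = (v : ℂ) := by ring
  norm_num at qAB qBC qCA
  linarith
end
end
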